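/- arXiv:0908.3056 — 2 statements merged into one kernel-verified Lean document; each statement's English description precedes it below -/
import Mathlib

section
/- Let (V,ρ) be an irreducible finite-dimensional complex representation of a finite group G with character χ, and let ξ be a linear character of G with χ = χ̄⊗ξ (that is, χ(g) = conj(χ(g))·ξ(g) for all g). Let W = {f ∈ V ⊗ V : (ρ(g) ⊗ ρ(g)) f = ξ(g)·f for all g ∈ G}. Then W is one-dimensional, and the flip map of V ⊗ V (swapping the two tensor factors) acts on W as multiplication by ν₂^ξ(χ), which equals 1 or −1. -/
/-!
The group acts on `V ⊗ V` by `g ↦ ξ(g)⁻¹ • (ρ g ⊗ ρ g)`, and `W` is the space of invariants of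
this twisted action, so the averaging operator `P` is a projection onto `W` and
`dim W = tr P = |G|⁻¹ ∑ ξ(g)⁻¹ χ(g)²`.  Since `χ = χ̄ ξ` and `χ̄(g) = χ(g⁻¹)`
(`trace_eq_conj_trace_of_pow_eq_one`), this is `|G|⁻¹ ∑ χ(g) χ(g⁻¹)`, which is `1` by Schur
orthogonality.

The flip `τ` commutes with the action, hence acts on the line `W` by a scalar `c`, and `c² = 1`
because `τ² = 1`.  So `τ ∘ P = c P` has trace `c`.  On the other hand
`tr (τ ∘ (A ⊗ B)) = tr (A B)` (`trace_flip_comp_map`) gives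
`tr (τ ∘ P) = |G|⁻¹ ∑ ξ(g)⁻¹ χ(g²)`, which is `ν` because `ξ(g)⁻¹ = conj (ξ g)`.
-/

open scoped BigOperators TensorProduct

/-- The subspace `W = {f ∈ V ⊗ V : (ρ(g) ⊗ ρ(g)) f = ξ(g) • f for all g}` of `V ⊗ V`. -/
noncomputable def twistedSymSpace (G : Type) [Group G] (V : FDRep ℂ G) (ξ : G →* ℂˣ) :
    Submodule ℂ (V ⊗[ℂ] V) where
  carrier := {f | ∀ g : G, TensorProduct.map (V.ρ g) (V.ρ g) f = (ξ g : ℂ) • f}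
  add_mem' := by
    intro a b ha hb g
    simp only [map_add, ha g, hb g, smul_add]
  zero_mem' := by intro g; simp
  smul_mem' := by
    intro c a ha g
    rw [LinearMap.map_smul, ha g, smul_comm]

/-- An endomorphism `A` of finite order is diagonalizable, with roots of unity as eigenvalues; its
inverse `B` acts on the `μ`-eigenspace of `A` as `μ⁻¹ = conj μ`. -/
lemma trace_eq_conj_trace_of_pow_eq_one {V : Type*} [AddCommGroup V] [Module ℂ V]
    [FiniteDimensional ℂ V] (A B : Module.End ℂ V) (hBA : B * A = 1)
    (n : ℕ) (hn : n ≠ 0) (hA : A ^ n = 1) :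
    LinearMap.trace ℂ V B = (starRingEnd ℂ) (LinearMap.trace ℂ V A) := by
  classical
  have hss : A.IsSemisimple := by
    refine Module.End.isSemisimple_of_squarefree_aeval_eq_zero
      (p := (Polynomial.X ^ n - 1 : Polynomial ℂ)) ?_ (by simp [hA])
    exact (Polynomial.separable_X_pow_sub_C (1 : ℂ) (by exact_mod_cast hn) one_ne_zero).squarefree
  have hint : DirectSum.IsInternal A.eigenspace :=
    (DirectSum.isInternal_submodule_iff_iSupIndep_and_iSup_eq_top _).2
      ⟨A.eigenspaces_iSupIndep, hss.iSup_eigenspace_eq_top⟩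
  have hfin : {μ | A.eigenspace μ ≠ ⊥}.Finite :=
    WellFoundedGT.finite_ne_bot_of_iSupIndep A.eigenspaces_iSupIndep
  have hpow : ∀ (μ : ℂ) (v : V), A v = μ • v → ∀ k : ℕ, (A ^ k) v = μ ^ k • v := by
    intro μ v hv k
    induction k with
    | zero => simp
    | succ k ih => rw [pow_succ', Module.End.mul_apply, ih, map_smul, hv, smul_smul, pow_succ]
  have hBv : ∀ (μ : ℂ) (v : V), v ∈ A.eigenspace μ → B v = (starRingEnd ℂ) μ • v := by
    intro μ v hv
    rw [Module.End.mem_eigenspace_iff] at hv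
    by_cases h0 : v = 0
    · simp [h0]
    have hμ : μ ^ n = 1 := by
      have h := hpow μ v hv n
      rw [hA, Module.End.one_apply] at h
      have h' : (1 - μ ^ n) • v = 0 := by rw [sub_smul, one_smul, ← h, sub_self]
      rcases smul_eq_zero.1 h' with h' | h'
      · exact (sub_eq_zero.1 h').symm
      · exact absurd h' h0
    have hnorm : ‖μ‖ = 1 := Complex.norm_eq_one_of_pow_eq_one hμ hn
    have hμ0 : μ ≠ 0 := by rintro rfl; simp at hnorm
    rw [← Complex.inv_eq_conj hnorm, eq_inv_smul_iff₀ hμ0, ← map_smul, ← hv,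
      ← Module.End.mul_apply, hBA, Module.End.one_apply]
  have hmA : ∀ μ, Set.MapsTo A (A.eigenspace μ) (A.eigenspace μ) := fun μ v hv => by
    have h : A v = μ • v := Module.End.mem_eigenspace_iff.1 hv
    rw [h]
    exact Submodule.smul_mem _ _ hv
  have hmB : ∀ μ, Set.MapsTo B (A.eigenspace μ) (A.eigenspace μ) := fun μ v hv => by
    rw [hBv μ v hv]
    exact Submodule.smul_mem _ _ hv
  rw [LinearMap.trace_eq_sum_trace_restrict' hint hfin hmA,
    LinearMap.trace_eq_sum_trace_restrict' hint hfin hmB, map_sum]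
  refine Finset.sum_congr rfl fun μ _ => ?_
  have h1 : B.restrict (hmB μ) = (starRingEnd ℂ) μ • LinearMap.id := by
    ext v
    exact hBv μ v v.2
  have h2 : A.restrict (hmA μ) = μ • LinearMap.id := by
    ext v
    exact Module.End.mem_eigenspace_iff.1 v.2
  rw [h1, h2]
  simp

lemma trace_flip_comp_map {V : Type*} [AddCommGroup V] [Module ℂ V]
    [FiniteDimensional ℂ V] (A B : Module.End ℂ V) :
    LinearMap.trace ℂ (V ⊗[ℂ] V)
      ((TensorProduct.comm ℂ V V).toLinearMap ∘ₗ TensorProduct.map A B)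
      = LinearMap.trace ℂ V (A * B) := by
  classical
  let b := Module.finBasis ℂ V
  rw [LinearMap.trace_eq_matrix_trace ℂ (b.tensorProduct b), LinearMap.trace_eq_matrix_trace ℂ b,
    LinearMap.toMatrix_mul]
  simp only [Matrix.trace, Matrix.diag, Matrix.mul_apply, Fintype.sum_prod_type]
  rw [Finset.sum_comm]
  refine Finset.sum_congr rfl fun i _ => Finset.sum_congr rfl fun j _ => ?_
  simp [LinearMap.toMatrix_apply]

/-- The action `g ↦ ξ(g)⁻¹ • (ρ g ⊗ ρ g)` of `G` on `V ⊗ V`; its invariants are the vectors on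
which `ρ g ⊗ ρ g` acts as `ξ g`. -/
noncomputable def twistedTensorRep {G V : Type*} [Group G] [AddCommGroup V] [Module ℂ V]
    (ρ : Representation ℂ G V) (ξ : G →* ℂˣ) : Representation ℂ G (V ⊗[ℂ] V) where
  toFun g := ((ξ g : ℂ)⁻¹) • TensorProduct.map (ρ g) (ρ g)
  map_one' := by simp
  map_mul' g h := by
    simp only [map_mul, TensorProduct.map_mul, Units.val_mul, mul_inv, smul_mul_smul_comm]

lemma conj_linear_char {G : Type*} [Group G] [Fintype G] (ξ : G →* ℂˣ) (g : G) :
    (starRingEnd ℂ) (ξ g : ℂ) = (ξ g : ℂ)⁻¹ := by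
  refine (Complex.inv_eq_conj (Complex.norm_eq_one_of_pow_eq_one (n := Fintype.card G) ?_
    Fintype.card_ne_zero)).symm
  rw [← Units.val_pow_eq_pow_val, ← map_pow, pow_card_eq_one, map_one, Units.val_one]

lemma character_inv_eq_conj {G : Type} [Group G] [Fintype G] (V : FDRep ℂ G) (g : G) :
    V.character g⁻¹ = (starRingEnd ℂ) (V.character g) := by
  refine trace_eq_conj_trace_of_pow_eq_one (V.ρ g) (V.ρ g⁻¹) ?_ (Fintype.card G)
    Fintype.card_ne_zero ?_
  · rw [← map_mul, inv_mul_cancel, map_one]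
  · rw [← map_pow, pow_card_eq_one, map_one]

lemma twistedSymSpace_eq_invariants {G : Type} [Group G] (V : FDRep ℂ G) (ξ : G →* ℂˣ) :
    twistedSymSpace G V ξ = (twistedTensorRep V.ρ ξ).invariants := by
  ext f
  refine forall_congr' fun g => ?_
  change _ ↔ (ξ g : ℂ)⁻¹ • TensorProduct.map (V.ρ g) (V.ρ g) f = f
  rw [inv_smul_eq_iff₀ (ξ g).ne_zero]

/-- Let `(V, ρ)` be an irreducible complex representation of a finite group
`G` with character `χ`, and `ξ` a linear character with `χ = χ̄ ⊗ ξ`.  Then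
`W = {f ∈ V ⊗ V : (ρ g ⊗ ρ g) f = ξ g • f}` is one-dimensional, the flip of `V ⊗ V` acts on
`W` as multiplication by `ν₂^ξ(χ)`, and `ν₂^ξ(χ) = 1` or `-1`. -/
theorem twisted_fs_flip (G : Type) [Group G] [Fintype G]
    (V : FDRep ℂ G) [CategoryTheory.Simple V] (ξ : G →* ℂˣ)
    (hχ : ∀ g : G, V.character g = (starRingEnd ℂ) (V.character g) * (ξ g : ℂ))
    (ν : ℂ)
    (hν : ν = (Fintype.card G : ℂ)⁻¹ *
      ∑ g : G, (starRingEnd ℂ) (ξ g : ℂ) * V.character (g ^ 2)) :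
    Module.finrank ℂ ↥(twistedSymSpace G V ξ) = 1 ∧
    (∀ f ∈ twistedSymSpace G V ξ, TensorProduct.comm ℂ V V f = ν • f) ∧
    (ν = 1 ∨ ν = -1) := by
  classical
  have hcard : (Nat.card G : ℂ) ≠ 0 := by simp
  let _ : Invertible (Nat.card G : ℂ) := invertibleOfNonzero hcard
  let _ : Invertible (Fintype.card G : ℂ) := invertibleOfNonzero (by simp)
  have hW := twistedSymSpace_eq_invariants V ξ
  have hchar : ∀ g, (twistedTensorRep V.ρ ξ).character g
      = V.character g * V.character g⁻¹ := by
    intro g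
    have h1 : (twistedTensorRep V.ρ ξ).character g
        = (ξ g : ℂ)⁻¹ * (V.character g * V.character g) := by
      change LinearMap.trace ℂ _ ((ξ g : ℂ)⁻¹ • TensorProduct.map (V.ρ g) (V.ρ g)) = _
      rw [map_smul, LinearMap.trace_tensorProduct', smul_eq_mul]
      rfl
    have hξ : (ξ g : ℂ) ≠ 0 := (ξ g).ne_zero
    rw [h1, character_inv_eq_conj]
    nth_rewrite 2 [hχ g]
    field_simp
  have hdim : Module.finrank ℂ (twistedTensorRep V.ρ ξ).invariants = 1 := by
    have h1 := (twistedTensorRep V.ρ ξ).card_inv_mul_sum_char_eq_finrank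
    have h2 := FDRep.char_orthonormal V V
    rw [if_pos ⟨CategoryTheory.Iso.refl V⟩] at h2
    simp_rw [hchar] at h1
    exact_mod_cast h1.symm.trans h2
  have hP := (twistedTensorRep V.ρ ξ).isProj_averageMap
  have htr : LinearMap.trace ℂ (V ⊗[ℂ] V) ((TensorProduct.comm ℂ V V).toLinearMap ∘ₗ
      (twistedTensorRep V.ρ ξ).averageMap) = ν := by
    have hav : (twistedTensorRep V.ρ ξ).averageMap = (Fintype.card G : ℂ)⁻¹ •
        ∑ g : G, (ξ g : ℂ)⁻¹ • TensorProduct.map (V.ρ g) (V.ρ g) := by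
      simp [Representation.averageMap, GroupAlgebra.average, map_sum, twistedTensorRep]
    rw [hav, hν, LinearMap.comp_smul, map_smul, smul_eq_mul, ← Module.End.mul_eq_comp,
      Finset.mul_sum, map_sum]
    congr 1
    refine Finset.sum_congr rfl fun g _ => ?_
    rw [Module.End.mul_eq_comp, LinearMap.comp_smul, map_smul, trace_flip_comp_map, conj_linear_char, ← map_mul,
      ← pow_two, smul_eq_mul]
    rfl
  obtain ⟨f₀, hf₀, hspan⟩ := finrank_eq_one_iff'.1 hdim
  have hτmem : TensorProduct.comm ℂ V V f₀.1 ∈ (twistedTensorRep V.ρ ξ).invariants := by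
    have hf : f₀.1 ∈ twistedSymSpace G V ξ := hW.ge f₀.2
    refine hW.le ?_
    intro g
    have hcomm : TensorProduct.map (V.ρ g) (V.ρ g) (TensorProduct.comm ℂ V V f₀.1)
        = TensorProduct.comm ℂ V V (TensorProduct.map (V.ρ g) (V.ρ g) f₀.1) :=
      TensorProduct.map_comm _ _ _
    rw [hcomm, hf g, map_smul]
  obtain ⟨c, hc⟩ := hspan ⟨_, hτmem⟩
  have hc' : TensorProduct.comm ℂ V V f₀.1 = c • f₀.1 := (congrArg Subtype.val hc).symm
  have hflip : ∀ f ∈ (twistedTensorRep V.ρ ξ).invariants,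
      TensorProduct.comm ℂ V V f = c • f := by
    intro f hf
    obtain ⟨a, ha⟩ := hspan ⟨f, hf⟩
    have ha' : a • f₀.1 = f := congrArg Subtype.val ha
    rw [← ha', map_smul, hc', smul_comm]
  have hcν : c = ν := by
    have h1 : (TensorProduct.comm ℂ V V).toLinearMap ∘ₗ (twistedTensorRep V.ρ ξ).averageMap
        = c • (twistedTensorRep V.ρ ξ).averageMap :=
      LinearMap.ext fun x => hflip _ (hP.map_mem x)
    rw [h1, map_smul, hP.trace, hdim] at htr
    simpa using htr
  subst hcν
  refine ⟨by rw [hW]; exact hdim, by rw [hW]; exact hflip, ?_⟩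
  have h2 : c • c • f₀.1 = f₀.1 := by
    rw [← hc', ← map_smul, ← hc']
    exact (TensorProduct.comm ℂ V V).symm_apply_apply _
  have h3 : (c * c - 1) • f₀.1 = 0 := by rw [sub_smul, mul_smul, h2, one_smul, sub_self]
  rcases smul_eq_zero.1 h3 with h | h
  · exact mul_self_eq_one_iff.1 (sub_eq_zero.1 h)
  · exact absurd (Subtype.ext h) hf₀
end

section
/- Fix a linear character ξ of G and a linear character ε of S₂. Let e = (1/|HG₁|)·∑_{h∈HG₁} conj((ξ⊗ε)(h))·h ∈ ℂ[SG₂] be the idempotent attached to ξ⊗ε. Then the Hecke algebra e·ℂ[SG₂]·e has complex dimension |G_{**}| − n_ξ, where |G_{**}| is the number of orbits of the involution C ↦ C⁻¹ on the set of conjugacy classes of G, and n_ξ = #{real conjugacy classes C of G with ξ(C) = −1}. -/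
/-!
Write `χ = ξ ⊗ ε`. Every double coset of `HG₁` in `SG₂` contains an element `((g,1),1)`, and
`e h = h e = χ(h) e` for `h ∈ HG₁` (`of_mul_charIdem`, `charIdem_mul_of`). So the Hecke algebra is
spanned by the elements `v_g = e ((g,1),1) e` (`charIdem_sandwich`). Conjugating by `((a,a),1)`
shows that `v_g` depends only on the conjugacy class of `g`, and conjugating by the transposition
gives `v_{g⁻¹} = ξ(g)⁻¹ v_g` (`heckeElt_inv`). One `v_g` for each orbit `{C, C⁻¹}` is therefore
enough, and `v_g = 0` when `g` is real with `ξ(g) = -1` (`heckeElt_eq_zero`).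

The remaining `v_g` are linearly independent by duality. If `F` is a class function on `G` with
`F(t⁻¹) = ξ(t)⁻¹ F(t)`, then `((a,b),σ) ↦ ε(σ) ξ(b) F(a b⁻¹)` transforms by `χ` under translation
by `HG₁` on both sides, so the functional it defines on `ℂ[SG₂]` sends `v_t` to `F(t)`
(`apply_charIdem_mul_mul`, `orbitFunctional_heckeElt`). For `F(t) = [t ∼ g] + ξ(t) [t⁻¹ ∼ g]` this
value vanishes when `t` lies outside the orbit of `g`, while `F(g)` is `1` or `1 + ξ(g)` and is
nonzero exactly when `g` is not real with `ξ(g) = -1`. Counting the surviving orbits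
(`card_goodOrbits`) gives the dimension.
-/

open scoped BigOperators


/-- Every permutation of `Fin 2` is the identity or the transposition. -/
lemma perm_fin_two_cases (σ : Equiv.Perm (Fin 2)) :
    σ = 1 ∨ σ = Equiv.swap 0 1 := by
  revert σ; decide

/-- The action of `S₂ = Equiv.Perm (Fin 2)` on `G × G` permuting the two coordinates. -/
def permProdAut (G : Type) [Group G] : Equiv.Perm (Fin 2) →* MulAut (G × G) where
  toFun σ := if σ = 1 then 1 else (MulEquiv.prodComm : G × G ≃* G × G)
  map_one' := if_pos rfl
  map_mul' σ τ := by
    have hswap : ((MulEquiv.prodComm : G × G ≃* G × G)) * ((MulEquiv.prodComm : G × G ≃* G × G)) = 1 :=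
      MulEquiv.ext fun p => rfl
    have hne : Equiv.swap (0 : Fin 2) 1 ≠ 1 := by decide
    rcases perm_fin_two_cases σ with hσ | hσ <;> rcases perm_fin_two_cases τ with hτ | hτ <;>
      subst hσ <;> subst hτ <;>
      simp [Equiv.swap_mul_self, hne, hswap]

/-- `SG₂ = G ≀ S₂`, realized as the semidirect product `(G × G) ⋊ S₂`. -/
abbrev SG2 (G : Type) [Group G] := (G × G) ⋊[permProdAut G] Equiv.Perm (Fin 2)

lemma permProdAut_diag (G : Type) [Group G] (σ : Equiv.Perm (Fin 2)) (p : G × G)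
    (hp : p.1 = p.2) : (permProdAut G σ p).1 = (permProdAut G σ p).2 := by
  by_cases h : σ = 1 <;> simp [permProdAut, h, hp]

/-- `HG₁ = {((g,g),σ)} ≤ SG₂`. -/
def HG1 (G : Type) [Group G] : Subgroup (SG2 G) where
  carrier := {x | x.left.1 = x.left.2}
  one_mem' := rfl
  mul_mem' := by
    intro a b ha hb
    simp only [Set.mem_setOf_eq] at *
    rw [SemidirectProduct.mul_left, Prod.fst_mul, Prod.snd_mul, ha,
      permProdAut_diag G a.right b.left hb]
  inv_mem' := by
    intro a ha
    simp only [Set.mem_setOf_eq] at *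
    rw [SemidirectProduct.inv_left]
    exact permProdAut_diag G a.right⁻¹ a.left⁻¹ (by rw [Prod.fst_inv, Prod.snd_inv, ha])

/-- The inverse of a conjugacy class: the class of `g` is sent to the class of `g⁻¹`. -/
def ConjClasses.inv' {G : Type*} [Group G] : ConjClasses G → ConjClasses G :=
  Quotient.map (·⁻¹) (by
    intro a b h
    change IsConj a b at h
    change IsConj a⁻¹ b⁻¹
    rw [isConj_iff] at h ⊢
    obtain ⟨c, rfl⟩ := h
    exact ⟨c, by group⟩)

/-- `|G_{**}|`: the number of orbits of the involution `C ↦ C⁻¹` on the set of conjugacy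
classes of `G` (each orbit being the set `{C, C⁻¹}`). -/
noncomputable def numStarStar (G : Type) [Group G] : ℕ :=
  Nat.card {S : Set (ConjClasses G) // ∃ C : ConjClasses G, S = {C, ConjClasses.inv' C}}

/-- `n_ξ`: the number of real conjugacy classes of `G` on which `ξ` takes the value `-1`. -/
noncomputable def numXi (G : Type) [Group G] (ξ : G →* ℂˣ) : ℕ :=
  Nat.card {C : ConjClasses G // ConjClasses.inv' C = C ∧
    ∀ g : G, ConjClasses.mk g = C → (ξ g : ℂ) = -1}

/-! ### The idempotent of a linear character -/

section Idempotent

variable {K : Type} [Group K] [Finite K] {H : Subgroup K}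

/-- The idempotent `(1/|H|) ∑ conj(χ(h)) h` attached to a linear character `χ` of `H`. -/
noncomputable def charIdem (χ : H →* ℂˣ) : MonoidAlgebra ℂ K :=
  (Nat.card H : ℂ)⁻¹ • ∑ᶠ h : H, (starRingEnd ℂ) (χ h : ℂ) • MonoidAlgebra.of ℂ K h.val

/-- The values of `χ` are roots of unity because `H` is finite, so conjugating inverts them. -/
lemma conj_char (χ : H →* ℂˣ) (h : H) : (starRingEnd ℂ) (χ h : ℂ) = (χ h⁻¹ : ℂˣ) := by
  have hn : ‖(χ h : ℂ)‖ = 1 := by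
    apply Complex.norm_eq_one_of_pow_eq_one (n := Nat.card H) _ Nat.card_pos.ne'
    rw [← Units.val_pow_eq_pow_val, ← map_pow, pow_card_eq_one', map_one, Units.val_one]
  rw [← Complex.inv_eq_conj hn, map_inv, Units.val_inv_eq_inv_val]

lemma of_mul_charIdem (χ : H →* ℂˣ) (k : H) :
    MonoidAlgebra.of ℂ K k.val * charIdem χ = (χ k : ℂ) • charIdem χ := by
  cases nonempty_fintype H
  simp only [charIdem, finsum_eq_sum_of_fintype, mul_smul_comm, Finset.mul_sum, conj_char]
  rw [smul_comm]
  congr 1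
  rw [Finset.smul_sum]
  refine Fintype.sum_equiv (Equiv.mulLeft k) _ _ fun h => ?_
  rw [← map_mul, smul_smul]
  simp [mul_comm (χ h : ℂ)⁻¹]

lemma charIdem_mul_of (χ : H →* ℂˣ) (k : H) :
    charIdem χ * MonoidAlgebra.of ℂ K k.val = (χ k : ℂ) • charIdem χ := by
  cases nonempty_fintype H
  simp only [charIdem, finsum_eq_sum_of_fintype, smul_mul_assoc, Finset.sum_mul, conj_char]
  rw [smul_comm]
  congr 1
  rw [Finset.smul_sum]
  refine Fintype.sum_equiv (Equiv.mulRight k) _ _ fun h => ?_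
  rw [← map_mul, smul_smul]
  simp

/-- A functional that transforms by `χ` under left and right translation by `H` does not see the
idempotent: it takes the same value on `e * x * e` and on `x`. -/
lemma apply_charIdem_mul_mul (χ : H →* ℂˣ) (φ : MonoidAlgebra ℂ K →ₗ[ℂ] ℂ)
    (hl : ∀ (h : H) (x : K), φ (MonoidAlgebra.of ℂ K (h * x)) =
      χ h * φ (MonoidAlgebra.of ℂ K x))
    (hr : ∀ (h : H) (x : K), φ (MonoidAlgebra.of ℂ K (x * h)) =
      χ h * φ (MonoidAlgebra.of ℂ K x)) (x : K) :
    φ (charIdem χ * MonoidAlgebra.of ℂ K x * charIdem χ) = φ (MonoidAlgebra.of ℂ K x) := by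
  cases nonempty_fintype H
  have hc : (Nat.card H : ℂ) ≠ 0 := Nat.cast_ne_zero.2 Nat.card_pos.ne'
  have hχ (h : H) : (starRingEnd ℂ) (χ h : ℂ) * χ h = 1 := by simp [conj_char]
  have hright (y : K) :
      φ (MonoidAlgebra.of ℂ K y * charIdem χ) = φ (MonoidAlgebra.of ℂ K y) := by
    simp only [charIdem, finsum_eq_sum_of_fintype, mul_smul_comm, Finset.mul_sum, map_smul,
      map_sum, ← map_mul, hr, smul_eq_mul]
    simp only [← mul_assoc, hχ, one_mul, Finset.sum_const, Finset.card_univ, nsmul_eq_mul,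
      ← Nat.card_eq_fintype_card, mul_inv_cancel₀ hc]
  rw [mul_assoc]
  generalize hz : charIdem χ = z at hright ⊢
  nth_rw 1 [← hz]
  simp only [charIdem, finsum_eq_sum_of_fintype, smul_mul_assoc, Finset.sum_mul, map_smul,
      map_sum, ← mul_assoc, ← map_mul, hright, hl, smul_eq_mul]
  simp only [← mul_assoc, hχ, one_mul, Finset.sum_const, Finset.card_univ, nsmul_eq_mul,
      ← Nat.card_eq_fintype_card, inv_mul_cancel₀ hc]

end Idempotent

/-! ### The character `ξ ⊗ ε` and invariant functions on `SG₂` -/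

section Wreath

variable {G : Type} [Group G]

lemma permProdAut_swap (a b : G) : permProdAut G (Equiv.swap 0 1) (a, b) = (b, a) := by
  have hne : Equiv.swap (0 : Fin 2) 1 ≠ 1 := by decide
  simp [permProdAut, hne]

lemma permProdAut_apply_diag (σ : Equiv.Perm (Fin 2)) (a : G) :
    permProdAut G σ (a, a) = (a, a) := by
  rcases perm_fin_two_cases σ with rfl | rfl
  · simp
  · exact permProdAut_swap a a

/-- The linear character `ξ ⊗ ε` of `HG₁`. -/
def tensorChar (ξ : G →* ℂˣ) (ε : Equiv.Perm (Fin 2) →* ℂˣ) : HG1 G →* ℂˣ where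
  toFun h := ξ h.val.left.1 * ε h.val.right
  map_one' := by simp
  map_mul' := by
    rintro ⟨⟨⟨a, a'⟩, σ⟩, ha⟩ ⟨⟨⟨b, b'⟩, τ⟩, hb⟩
    obtain rfl : a = a' := ha
    obtain rfl : b = b' := hb
    simp [permProdAut_apply_diag, mul_mul_mul_comm]

/-- The diagonal element `((a,a),1)` of `HG₁`. -/
def diagElt (a : G) : HG1 G := ⟨⟨(a, a), 1⟩, rfl⟩

/-- The element `((1,1),σ)` of `HG₁`. -/
def permElt (G : Type) [Group G] (σ : Equiv.Perm (Fin 2)) : HG1 G := ⟨⟨(1, 1), σ⟩, rfl⟩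

/-- The double coset representative `((g,1),1)`. -/
def leftElt (g : G) : SG2 G := ⟨(g, 1), 1⟩

lemma HG1_eq (h : HG1 G) : h = diagElt h.val.left.1 * permElt G h.val.right := by
  obtain ⟨⟨⟨a, a'⟩, σ⟩, ha⟩ := h
  obtain rfl : a = a' := ha
  apply Subtype.ext
  apply SemidirectProduct.ext <;> simp [diagElt, permElt]

lemma tensorChar_diagElt (ξ : G →* ℂˣ) (ε : Equiv.Perm (Fin 2) →* ℂˣ) (a : G) :
    tensorChar ξ ε (diagElt a) = ξ a := by
  simp [tensorChar, diagElt]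

lemma tensorChar_permElt (ξ : G →* ℂˣ) (ε : Equiv.Perm (Fin 2) →* ℂˣ) (σ : Equiv.Perm (Fin 2)) :
    tensorChar ξ ε (permElt G σ) = ε σ := by
  simp [tensorChar, permElt]

/-- Extension of a function `F` on `G` to `SG₂`. When `F` is a class function with
`F(t⁻¹) = ξ(t)⁻¹ F(t)`, the result transforms by `ξ ⊗ ε` under left and right translation by
`HG₁`. -/
def extendFun (ξ : G →* ℂˣ) (ε : Equiv.Perm (Fin 2) →* ℂˣ) (F : G → ℂ) (x : SG2 G) : ℂ :=
  ε x.right * ξ x.left.2 * F (x.left.1 * x.left.2⁻¹)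

variable (ξ : G →* ℂˣ) (ε : Equiv.Perm (Fin 2) →* ℂˣ) {F : G → ℂ}

lemma extendFun_left (hF : ∀ a t, F (a * t * a⁻¹) = F t)
    (hF' : ∀ t, F t⁻¹ = (ξ t : ℂ)⁻¹ * F t) (h : HG1 G) (x : SG2 G) :
    extendFun ξ ε F (h * x) = tensorChar ξ ε h * extendFun ξ ε F x := by
  have hd (a : G) (x : SG2 G) :
      extendFun ξ ε F (diagElt a * x) = ξ a * extendFun ξ ε F x := by
    have := hF a (x.left.1 * x.left.2⁻¹)
    simp only [← mul_assoc] at this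
    simp only [extendFun, diagElt, SemidirectProduct.mul_left, SemidirectProduct.mul_right, map_one,
      MulAut.one_apply, Prod.fst_mul, Prod.snd_mul, one_mul, mul_inv_rev, map_mul, ← mul_assoc,
      this, Units.val_mul]
    ring
  have hp (σ : Equiv.Perm (Fin 2)) (x : SG2 G) :
      extendFun ξ ε F (permElt G σ * x) = ε σ * extendFun ξ ε F x := by
    obtain ⟨⟨a, b⟩, τ⟩ := x
    rcases perm_fin_two_cases σ with rfl | rfl
    · simp [extendFun, permElt]
    · have := hF' (a * b⁻¹)
      rw [mul_inv_rev, inv_inv] at this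
      simp only [extendFun, permElt, SemidirectProduct.mul_left, SemidirectProduct.mul_right,
        permProdAut_swap, Prod.fst_mul, Prod.snd_mul, one_mul, map_mul, this, Units.val_mul,
        map_inv, Units.val_inv_eq_inv_val]
      field_simp
  conv_lhs => rw [HG1_eq h]
  conv_rhs => rw [HG1_eq h]
  rw [Subgroup.coe_mul, mul_assoc, hd, hp, map_mul, tensorChar_diagElt, tensorChar_permElt,
    Units.val_mul, mul_assoc]

lemma extendFun_right (h : HG1 G) (x : SG2 G) :
    extendFun ξ ε F (x * h) = tensorChar ξ ε h * extendFun ξ ε F x := by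
  obtain ⟨⟨⟨a, a'⟩, σ⟩, ha⟩ := h
  obtain rfl : a = a' := ha
  simp [extendFun, tensorChar, permProdAut_apply_diag]
  ring

open Classical in
/-- The indicator function of the conjugacy class of `g`. -/
noncomputable def classInd (g t : G) : ℂ := if IsConj g t then 1 else 0

lemma classInd_conj (g a t : G) : classInd g (a * t * a⁻¹) = classInd g t := by
  have h : IsConj t (a * t * a⁻¹) := isConj_iff.2 ⟨a, rfl⟩
  classical
  have h' : IsConj g (a * t * a⁻¹) ↔ IsConj g t :=
    ⟨fun h' => h'.trans h.symm, fun h' => h'.trans h⟩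
  unfold classInd
  split_ifs <;> tauto

/-- The invariant function attached to the orbit `{[g], [g⁻¹]}`; it vanishes off this orbit. -/
noncomputable def orbitFun (g t : G) : ℂ := classInd g t + ξ t * classInd g t⁻¹

lemma orbitFun_conj (g a t : G) : orbitFun ξ g (a * t * a⁻¹) = orbitFun ξ g t := by
  have h : (a * t * a⁻¹)⁻¹ = a * t⁻¹ * a⁻¹ := by group
  rw [orbitFun, h, classInd_conj, classInd_conj, orbitFun]
  simp

lemma orbitFun_inv (g t : G) : orbitFun ξ g t⁻¹ = (ξ t : ℂ)⁻¹ * orbitFun ξ g t := by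
  simp only [orbitFun, inv_inv, map_inv, Units.val_inv_eq_inv_val]
  field_simp
  ring

/-- The functional on `ℂ[SG₂]` given by the invariant function of the orbit of `g`. -/
noncomputable def orbitFunctional (g : G) : MonoidAlgebra ℂ (SG2 G) →ₗ[ℂ] ℂ :=
  (MonoidAlgebra.basis (SG2 G) ℂ).constr ℂ (extendFun ξ ε (orbitFun ξ g))

lemma orbitFunctional_of (g : G) (x : SG2 G) :
    orbitFunctional ξ ε g (MonoidAlgebra.of ℂ (SG2 G) x) = extendFun ξ ε (orbitFun ξ g) x := by
  rw [MonoidAlgebra.of_apply, ← MonoidAlgebra.basis_apply, orbitFunctional,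
    Module.Basis.constr_basis]

/-! ### The elements `e ((g,1),1) e` and their pairing with the functionals -/

/-- The elements `e ((g,1),1) e`, which span the Hecke algebra. -/
noncomputable def heckeElt (g : G) : MonoidAlgebra ℂ (SG2 G) :=
  charIdem (tensorChar ξ ε) * MonoidAlgebra.of ℂ (SG2 G) (leftElt g) * charIdem (tensorChar ξ ε)

variable [Finite G]

instance : Finite (SG2 G) := Finite.of_equiv _ SemidirectProduct.equivProd.symm

lemma charIdem_translate (h k : HG1 G) (x : SG2 G) :
    charIdem (tensorChar ξ ε) * MonoidAlgebra.of ℂ (SG2 G) (h * x * k) *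
      charIdem (tensorChar ξ ε) = (tensorChar ξ ε h * tensorChar ξ ε k : ℂ) •
      (charIdem (tensorChar ξ ε) * MonoidAlgebra.of ℂ (SG2 G) x * charIdem (tensorChar ξ ε)) := by
  rw [map_mul, map_mul, ← mul_assoc, ← mul_assoc, charIdem_mul_of, mul_assoc _ _ (charIdem _),
    of_mul_charIdem]
  simp only [smul_mul_assoc, mul_smul_comm, smul_smul]
  rw [mul_comm]

lemma charIdem_sandwich (x : SG2 G) : ∃ c : ℂ,
    charIdem (tensorChar ξ ε) * MonoidAlgebra.of ℂ (SG2 G) x * charIdem (tensorChar ξ ε) =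
      c • heckeElt ξ ε (x.left.1 * x.left.2⁻¹) := by
  obtain ⟨⟨a, b⟩, σ⟩ := x
  have h := charIdem_translate ξ ε 1 (diagElt b * permElt G σ) (leftElt (a * b⁻¹))
  have hx : ((1 : HG1 G) : SG2 G) * leftElt (a * b⁻¹) * (diagElt b * permElt G σ : HG1 G) =
      ⟨(a, b), σ⟩ := by
    apply SemidirectProduct.ext <;> simp [leftElt, diagElt, permElt]
  rw [hx] at h
  exact ⟨_, h⟩

lemma heckeElt_isConj {g t : G} (h : IsConj g t) : heckeElt ξ ε g = heckeElt ξ ε t := by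
  obtain ⟨a, rfl⟩ := isConj_iff.1 h
  have h := charIdem_translate ξ ε (diagElt a) (diagElt a⁻¹) (leftElt g)
  have hx : (diagElt a : SG2 G) * leftElt g * (diagElt a⁻¹ : HG1 G) = leftElt (a * g * a⁻¹) := by
    apply SemidirectProduct.ext <;> simp [leftElt, diagElt]
  rw [hx, tensorChar_diagElt, tensorChar_diagElt, ← Units.val_mul, ← map_mul] at h
  simpa [heckeElt] using h.symm

lemma heckeElt_inv (g : G) : heckeElt ξ ε g⁻¹ = (ξ g : ℂ)⁻¹ • heckeElt ξ ε g := by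
  have h := charIdem_translate ξ ε (diagElt g⁻¹ * permElt G (Equiv.swap 0 1))
    (permElt G (Equiv.swap 0 1)) (leftElt g)
  have hx : ((diagElt g⁻¹ * permElt G (Equiv.swap 0 1) : HG1 G) : SG2 G) * leftElt g *
      (permElt G (Equiv.swap 0 1) : HG1 G) = leftElt g⁻¹ := by
    apply SemidirectProduct.ext <;> simp [leftElt, diagElt, permElt, permProdAut_swap]
  rw [hx, map_mul, tensorChar_diagElt, tensorChar_permElt, ← Units.val_mul, mul_assoc (ξ _),
    ← map_mul ε,
    Equiv.swap_mul_self, map_one, mul_one, map_inv, Units.val_inv_eq_inv_val] at h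
  exact h

lemma heckeElt_eq_zero {g : G} (h : IsConj g g⁻¹) (hξ : (ξ g : ℂ) = -1) :
    heckeElt ξ ε g = 0 := by
  have h1 := heckeElt_inv ξ ε g
  rw [← heckeElt_isConj ξ ε h, hξ] at h1
  have h2 : (2 : ℂ) • heckeElt ξ ε g = 0 := by
    rw [two_smul]
    nth_rw 1 [h1]
    norm_num
  simpa using h2

lemma orbitFunctional_heckeElt (g t : G) :
    orbitFunctional ξ ε g (heckeElt ξ ε t) = orbitFun ξ g t := by
  rw [heckeElt, apply_charIdem_mul_mul, orbitFunctional_of]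
  · simp [extendFun, leftElt]
  · intro h x
    rw [orbitFunctional_of, orbitFunctional_of]
    exact extendFun_left ξ ε (orbitFun_conj ξ g) (orbitFun_inv ξ g) h x
  · intro h x
    rw [orbitFunctional_of, orbitFunctional_of]
    exact extendFun_right ξ ε h x

end Wreath

/-! ### Counting orbits -/

section Counting

variable {G : Type} [Group G] (ξ : G →* ℂˣ)

/-- The orbit `{C, C⁻¹}` of the class of `g`. -/
def orbitOf (g : G) : Set (ConjClasses G) := {ConjClasses.mk g, ConjClasses.inv' (ConjClasses.mk g)}

lemma inv'_mk (g : G) : ConjClasses.inv' (ConjClasses.mk g) = ConjClasses.mk g⁻¹ := rfl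

lemma isConj_inv {g t : G} (h : IsConj g t) : IsConj g⁻¹ t⁻¹ := by
  rw [← ConjClasses.mk_eq_mk_iff_isConj, ← inv'_mk, ← inv'_mk,
    ConjClasses.mk_eq_mk_iff_isConj.2 h]

lemma orbitOf_eq_iff (g t : G) : orbitOf g = orbitOf t ↔ IsConj g t ∨ IsConj g t⁻¹ := by
  simp only [orbitOf, inv'_mk]
  constructor
  · intro h
    have : ConjClasses.mk g ∈ ({ConjClasses.mk t, ConjClasses.mk t⁻¹} : Set _) := h ▸ by simp
    simpa [ConjClasses.mk_eq_mk_iff_isConj] using this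
  · rintro (h | h)
    · rw [ConjClasses.mk_eq_mk_iff_isConj.2 h, ConjClasses.mk_eq_mk_iff_isConj.2 (isConj_inv h)]
    · rw [ConjClasses.mk_eq_mk_iff_isConj.2 h, ConjClasses.mk_eq_mk_iff_isConj.2 (isConj_inv h),
        inv_inv, Set.pair_comm]

/-- The set of orbits of `C ↦ C⁻¹` on conjugacy classes. -/
def orbitSet (G : Type) [Group G] : Set (Set (ConjClasses G)) :=
  {S | ∃ C : ConjClasses G, S = {C, ConjClasses.inv' C}}

/-- The real classes on which `ξ` is `-1`. -/
def badClasses : Set (ConjClasses G) :=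
  {C | ConjClasses.inv' C = C ∧ ∀ g : G, ConjClasses.mk g = C → (ξ g : ℂ) = -1}

/-- The orbits that survive in the Hecke algebra: those that do not consist of a single real class
on which `ξ` is `-1`. -/
def goodOrbits : Set (Set (ConjClasses G)) := orbitSet G \ ((fun C => {C}) '' badClasses ξ)

lemma exists_rep (S : goodOrbits ξ) : ∃ g : G, orbitOf g = S := by
  obtain ⟨S, ⟨C, rfl⟩, -⟩ := S
  obtain ⟨g, rfl⟩ := ConjClasses.exists_rep C
  exact ⟨g, rfl⟩

lemma char_isConj {g t : G} (h : IsConj g t) : ξ g = ξ t := by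
  obtain ⟨a, rfl⟩ := isConj_iff.1 h
  simp [mul_comm (ξ a)]

lemma orbitOf_mem_bad_iff (g : G) : orbitOf g ∈ (fun C => {C}) '' badClasses ξ ↔
    IsConj g g⁻¹ ∧ (ξ g : ℂ) = -1 := by
  constructor
  · rintro ⟨C, ⟨hC, hξ⟩, h⟩
    have h' : {C} = orbitOf g := h
    have h1 : ConjClasses.mk g = C := by
      have : ConjClasses.mk g ∈ ({C} : Set _) := h' ▸ by simp [orbitOf]
      simpa using this
    refine ⟨?_, hξ g h1⟩
    rw [← h1, inv'_mk] at hC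
    exact (ConjClasses.mk_eq_mk_iff_isConj.1 hC).symm
  · rintro ⟨h, hξ⟩
    have h1 : ConjClasses.inv' (ConjClasses.mk g) = ConjClasses.mk g := by
      rw [inv'_mk, ConjClasses.mk_eq_mk_iff_isConj]
      exact h.symm
    refine ⟨ConjClasses.mk g, ⟨h1, fun t ht => ?_⟩, ?_⟩
    · rw [char_isConj ξ (ConjClasses.mk_eq_mk_iff_isConj.1 ht), hξ]
    · simp [orbitOf, h1]

lemma card_goodOrbits [Finite G] :
    Nat.card (goodOrbits ξ) = numStarStar G - numXi G ξ := by
  have hfin : Finite (ConjClasses G) := Quotient.finite _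
  have hsub : (fun C => {C}) '' badClasses ξ ⊆ orbitSet G := by
    rintro _ ⟨C, ⟨hC, -⟩, rfl⟩
    exact ⟨C, by simp [hC]⟩
  have h1 : numXi G ξ = ((fun C => ({C} : Set (ConjClasses G))) '' badClasses ξ).ncard := by
    rw [Set.ncard_image_of_injective _ Set.singleton_injective]
    rfl
  have h2 : numStarStar G = (orbitSet G).ncard := rfl
  rw [h1, h2, Nat.card_coe_set_eq, goodOrbits, Set.ncard_sdiff hsub]

lemma orbitFun_self_ne_zero {g : G} (h : orbitOf g ∈ goodOrbits ξ) : orbitFun ξ g g ≠ 0 := by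
  have hg := mt (orbitOf_mem_bad_iff ξ g).2 h.2
  have h1 : classInd g g = 1 := if_pos (IsConj.refl g)
  rw [orbitFun, h1]
  by_cases hr : IsConj g g⁻¹
  · have h2 : classInd g g⁻¹ = 1 := if_pos hr
    rw [h2, mul_one]
    intro h0
    exact hg ⟨hr, by linear_combination h0⟩
  · have h2 : classInd g g⁻¹ = 0 := if_neg hr
    simp [h2]

lemma orbitFun_eq_zero {g t : G} (h : orbitOf g ≠ orbitOf t) : orbitFun ξ g t = 0 := by
  rw [Ne, orbitOf_eq_iff, not_or] at h
  rw [orbitFun, classInd, classInd, if_neg h.1, if_neg h.2, mul_zero, add_zero]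

end Counting

/-- Let `e ∈ ℂ[SG₂]` be the idempotent attached to the linear character
`ξ⊗ε` of `HG₁`.  Then the Hecke algebra `e·ℂ[SG₂]·e` (the span of the elements `e * x * e`,
`x ∈ SG₂`) has complex dimension `|G_{**}| − n_ξ`. -/
theorem hecke_algebra_dimension (G : Type) [Group G] [Fintype G]
    (ξ : G →* ℂˣ) (ε : Equiv.Perm (Fin 2) →* ℂˣ)
    (e : MonoidAlgebra ℂ (SG2 G))
    (he : e = (Nat.card (HG1 G) : ℂ)⁻¹ •
      ∑ᶠ h : (HG1 G), (starRingEnd ℂ) ((ξ h.val.left.1 : ℂ) * (ε h.val.right : ℂ)) •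
        MonoidAlgebra.of ℂ (SG2 G) h.val) :
    Module.finrank ℂ
        ↥(Submodule.span ℂ
          {z : MonoidAlgebra ℂ (SG2 G) | ∃ x : SG2 G, z = e * MonoidAlgebra.of ℂ (SG2 G) x * e})
      = numStarStar G - numXi G ξ := by
  classical
  have : Finite (ConjClasses G) := Quotient.finite _
  cases nonempty_fintype (goodOrbits ξ)
  choose r hr using exists_rep ξ
  have he' : e = charIdem (tensorChar ξ ε) := by
    rw [he]
    simp [charIdem, tensorChar]
  have hspan : Submodule.span ℂ
      {z : MonoidAlgebra ℂ (SG2 G) | ∃ x : SG2 G, z = e * MonoidAlgebra.of ℂ (SG2 G) x * e} =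
      Submodule.span ℂ (Set.range fun S => heckeElt ξ ε (r S)) := by
    apply le_antisymm <;> rw [Submodule.span_le]
    · rintro _ ⟨x, rfl⟩
      obtain ⟨c, hc⟩ := charIdem_sandwich ξ ε x
      rw [he', hc]
      apply Submodule.smul_mem
      generalize x.left.1 * x.left.2⁻¹ = g
      by_cases hg : orbitOf g ∈ goodOrbits ξ
      · have hmem := Submodule.subset_span (R := ℂ)
          (Set.mem_range_self (f := fun S => heckeElt ξ ε (r S)) ⟨orbitOf g, hg⟩)
        rcases (orbitOf_eq_iff _ _).1 (hr ⟨orbitOf g, hg⟩).symm with h | h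
        · rwa [heckeElt_isConj ξ ε h]
        · rw [heckeElt_isConj ξ ε h, heckeElt_inv]
          exact Submodule.smul_mem _ _ hmem
      · have hbad : orbitOf g ∈ (fun C => {C}) '' badClasses ξ := by
          by_contra hb
          exact hg ⟨⟨_, rfl⟩, hb⟩
        obtain ⟨h1, h2⟩ := (orbitOf_mem_bad_iff ξ g).1 hbad
        rw [heckeElt_eq_zero ξ ε h1 h2]
        exact Submodule.zero_mem _
    · rintro _ ⟨S, rfl⟩
      exact Submodule.subset_span ⟨leftElt (r S), by rw [he']; rfl⟩
  have hli : LinearIndependent ℂ fun S => heckeElt ξ ε (r S) := by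
    rw [Fintype.linearIndependent_iff]
    intro c hc S
    have h := congrArg (orbitFunctional ξ ε (r S)) hc
    simp only [map_sum, map_smul, orbitFunctional_heckeElt, map_zero, smul_eq_mul] at h
    rw [Finset.sum_eq_single S] at h
    · refine (mul_eq_zero.1 h).resolve_right (orbitFun_self_ne_zero ξ ?_)
      rw [hr]
      exact S.2
    · intro T _ hT
      rw [orbitFun_eq_zero, mul_zero]
      rw [hr, hr]
      exact fun h => hT (Subtype.ext h).symm
    · simp
  rw [hspan, finrank_span_eq_card hli, ← Nat.card_eq_fintype_card, card_goodOrbits]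
end
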